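/- For every even nonnegative integer m, the polynomial P_m(z) = P_m^{(m+1/2, -m-1/2)}(z) has no real zeros. -/

import Mathlib

open Finset

/-- Generalized binomial coefficient `binom(u, j) = u(u-1)⋯(u-j+1)/j!`. -/
noncomputable def gbinom (u : ℝ) (j : ℕ) : ℝ :=
  (∏ i ∈ Finset.range j, (u - i)) / (Nat.factorial j)

/-- Jacobi polynomial via the explicit sum formula. -/
noncomputable def jacobiP (n : ℕ) (α β : ℝ) (x : ℝ) : ℝ :=
  ((2:ℝ)^n)⁻¹ * ∑ k ∈ Finset.range (n+1),
    gbinom ((n:ℝ) + α) (n - k) * gbinom ((n:ℝ) + β) k * (x - 1)^k * (x + 1)^(n - k)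

lemma gbinom_zero (u : ℝ) : gbinom u 0 = 1 := by simp [gbinom]

lemma gbinom_succ (u : ℝ) (j : ℕ) :
    ((j:ℝ) + 1) * gbinom u (j+1) = (u - j) * gbinom u j := by
  unfold gbinom
  rw [Finset.prod_range_succ, Nat.factorial_succ]
  have h1 : (Nat.factorial j : ℝ) ≠ 0 := by exact_mod_cast Nat.factorial_ne_zero j
  have h2 : (j:ℝ) + 1 ≠ 0 := by positivity
  push_cast
  field_simp

lemma gbinom_pos (u : ℝ) (j : ℕ) (h : (j:ℝ) ≤ u + 1/2) : 0 < gbinom u j := by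
  unfold gbinom
  apply div_pos _ (by exact_mod_cast Nat.factorial_pos j)
  apply Finset.prod_pos
  intro i hi
  have : (i:ℝ) + 1 ≤ j := by exact_mod_cast Finset.mem_range.1 hi
  linarith

lemma gbinom_neg_half (k : ℕ) : 0 < gbinom (-1/2) k * (-1)^k := by
  induction k with
  | zero => simp [gbinom]
  | succ k ih =>
    have h := gbinom_succ (-1/2) k
    have h2 : (0:ℝ) < (k:ℝ) + 1 := by positivity
    have h3 : ((k:ℝ)+1) * (gbinom (-1/2) (k+1) * (-1)^(k+1))
        = ((k:ℝ) + 1/2) * (gbinom (-1/2) k * (-1)^k) := by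
      rw [← mul_assoc, h, pow_succ]; ring
    have h4 : 0 < ((k:ℝ)+1) * (gbinom (-1/2) (k+1) * (-1)^(k+1)) := by
      rw [h3]; positivity
    exact (mul_pos_iff_of_pos_left h2).1 h4

lemma gbinom_vandermonde (u v : ℝ) (n : ℕ) :
    ∑ k ∈ Finset.range (n+1), gbinom u (n-k) * gbinom v k = gbinom (u+v) n := by
  induction n with
  | zero => simp [gbinom]
  | succ n ih =>
    have h2 : ((n:ℝ) + 1) ≠ 0 := by positivity
    apply mul_left_cancel₀ h2
    rw [gbinom_succ, ← ih, Finset.mul_sum, Finset.mul_sum]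
    have e1 : ∑ k ∈ Finset.range (n+1+1), ((n:ℝ)+1) * (gbinom u (n+1-k) * gbinom v k)
        = ∑ k ∈ Finset.range (n+1+1), ((n:ℝ)+1-k) * (gbinom u (n+1-k) * gbinom v k)
        + ∑ k ∈ Finset.range (n+1+1), (k:ℝ) * (gbinom u (n+1-k) * gbinom v k) := by
      rw [← Finset.sum_add_distrib]
      exact Finset.sum_congr rfl fun k _ => by ring
    rw [e1, Finset.sum_range_succ, Finset.sum_range_succ' (n := n+1)]
    push_cast
    simp only [sub_self, zero_mul, add_zero]
    rw [← Finset.sum_add_distrib]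
    apply Finset.sum_congr rfl
    intro k hk
    obtain ⟨j, rfl⟩ := Nat.exists_eq_add_of_le (Nat.lt_succ_iff.1 (Finset.mem_range.1 hk))
    have a1 : k + j + 1 - k = j + 1 := by omega
    have a2 : k + j - k = j := by omega
    rw [a1, a2]
    have g1 := gbinom_succ u j
    have g2 := gbinom_succ v k
    push_cast
    linear_combination (gbinom v k) * g1 + (gbinom u j) * g2

open Polynomial in
/-- The (unnormalised) Jacobi polynomial as a polynomial. -/
noncomputable def jacPoly (m : ℕ) (e : ℕ → ℝ) : ℝ[X] :=
  ∑ k ∈ Finset.range (m+1), C (e k) * ((X - 1)^k * (X + 1)^(m-k))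

open Polynomial in
lemma jacPoly_coeff (m : ℕ) (e : ℕ → ℝ) :
    (jacPoly m e).natDegree ≤ m ∧ (jacPoly m e).coeff m = ∑ k ∈ Finset.range (m+1), e k := by
  have hmon : ∀ k ∈ Finset.range (m+1),
      ((X - 1 : ℝ[X])^k * (X + 1)^(m-k)).Monic ∧
      ((X - 1 : ℝ[X])^k * (X + 1)^(m-k)).natDegree = m := by
    intro k hk
    have h1 : (X - 1 : ℝ[X]).Monic := by simpa using monic_X_sub_C (1:ℝ)
    have h2 : (X + 1 : ℝ[X]).Monic := by simpa using monic_X_add_C (1:ℝ)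
    have d1 : (X - 1 : ℝ[X]).natDegree = 1 := by simpa using natDegree_X_sub_C (1:ℝ)
    have d2 : (X + 1 : ℝ[X]).natDegree = 1 := by simpa using natDegree_X_add_C (1:ℝ)
    refine ⟨(h1.pow k).mul (h2.pow _), ?_⟩
    rw [(h1.pow k).natDegree_mul (h2.pow _), h1.natDegree_pow, h2.natDegree_pow, d1, d2]
    have := Finset.mem_range.1 hk
    omega
  constructor
  · apply natDegree_sum_le_of_forall_le
    intro k hk
    exact (natDegree_C_mul_le _ _).trans (hmon k hk).2.le
  · unfold jacPoly
    rw [finsetSum_coeff]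
    apply Finset.sum_congr rfl
    intro k hk
    rw [coeff_C_mul]
    have := (hmon k hk).1.coeff_natDegree
    rw [(hmon k hk).2] at this
    rw [this, mul_one]

open Polynomial in
lemma jac_term (m k j : ℕ) (h : k + j = m) (c : ℝ) :
    ((X-1)*(X+1) : ℝ[X]) * ((X-1)*(X+1) * derivative (derivative ((X-1)^k*(X+1)^j))
      + (C (2*c+1) + 2 * X) * derivative ((X-1)^k*(X+1)^j)
      - C ((m:ℝ)*(m+1)) * ((X-1)^k*(X+1)^j))
    = ((X-1)^k*(X+1)^j) * (2 * C ((k:ℝ)*(k+(c+1/2))) * (X+1)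
       - 2 * C ((j:ℝ)*(j - (c+1/2))) * (X-1)) := by
  have key : ∀ (q : ℝ[X]) (n : ℕ), derivative q = 1 → q * derivative (q^n) = C (n:ℝ) * q^n := by
    intro q n hq
    rw [derivative_pow, hq]
    cases n with
    | zero => simp
    | succ n => simp [pow_succ]; ring
  have k1 := key (X-1) k (by simp)
  have k2 := key (X+1) j (by simp)
  set t : ℝ[X] := (X-1)^k*(X+1)^j with ht
  have d1 : (X-1)*(X+1) * derivative t = (C (k:ℝ) * (X+1) + C (j:ℝ) * (X-1)) * t := by
    rw [ht, derivative_mul]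
    linear_combination (X+1)^(j+1) * k1 + (X-1)^(k+1) * k2
  have d2 := congrArg derivative d1
  simp only [derivative_mul, derivative_add, derivative_sub, derivative_C, derivative_X,
    derivative_one] at d2
  subst h
  simp only [C_add, C_mul, C_sub, Nat.cast_add, map_natCast, C_1, map_ofNat] at d1 d2 ⊢
  have hh : (2:ℝ[X]) * C (1/2:ℝ) = 1 := by
    rw [show (2:ℝ[X]) = C 2 from (map_ofNat C 2).symm, ← C_mul]; norm_num
  linear_combination (X-1)*(X+1) * d2 + (2 * C c + 1 + (k:ℝ[X]) * (X+1) + (j:ℝ[X]) * (X-1)) * d1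
    - ((k:ℝ[X]) * (X+1) + (j:ℝ[X]) * (X-1)) * t * hh

open Polynomial in
lemma jac_ode (m : ℕ) (e : ℕ → ℝ) (c : ℝ)
    (he : ∀ k i : ℕ, k + (i + 1) = m →
      e (k+1) * ((k+1) * (k+1+(c+1/2))) = e k * ((i+1) * (i+1-(c+1/2)))) :
    ((X-1)*(X+1) : ℝ[X]) * derivative (derivative (jacPoly m e))
      + (C (2*c+1) + 2 * X) * derivative (jacPoly m e)
      - C ((m:ℝ)*(m+1)) * jacPoly m e = 0 := by
  have hne : ((X-1)*(X+1) : ℝ[X]) ≠ 0 := by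
    apply mul_ne_zero
    · simpa using X_sub_C_ne_zero (1:ℝ)
    · simpa using X_add_C_ne_zero (1:ℝ)
  apply mul_left_cancel₀ hne
  rw [mul_zero]
  let F : ℕ → ℝ[X] := fun k => 2 * C (e k * ((k:ℝ)*(k+(c+1/2)))) * ((X-1)^k*(X+1)^(m+1-k))
  have hterm : ∀ k ∈ Finset.range m, C (e k) * (((X-1)^k*(X+1)^(m-k)) *
      (2 * C ((k:ℝ)*(k+(c+1/2))) * (X+1) - 2 * C (((m-k:ℕ):ℝ)*((m-k:ℕ) - (c+1/2))) * (X-1)))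
      = F k - F (k+1) := by
    intro k hk
    obtain ⟨i, hi⟩ := Nat.exists_eq_add_of_le (Nat.succ_le_of_lt (Finset.mem_range.1 hk))
    have hi' : k + (i+1) = m := by omega
    have h := he k i hi'
    have a1 : m - k = i + 1 := by omega
    have a2 : m + 1 - k = i + 2 := by omega
    have a3 : m + 1 - (k+1) = i + 1 := by omega
    simp only [F]
    rw [a1, a2, a3]
    push_cast
    rw [h]
    simp only [C_mul]
    ring
  have hlast : C (e m) * (((X-1)^m*(X+1)^(m-m)) *
      (2 * C ((m:ℝ)*(m+(c+1/2))) * (X+1) - 2 * C (((m-m:ℕ):ℝ)*((m-m:ℕ) - (c+1/2))) * (X-1)))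
      = F m := by
    have a2 : m + 1 - m = 1 := by omega
    simp only [F, a2, Nat.sub_self, C_mul]
    simp
    ring
  have hsum : ((X-1)*(X+1) : ℝ[X]) * (((X-1)*(X+1) : ℝ[X]) * derivative (derivative (jacPoly m e))
      + (C (2*c+1) + 2 * X) * derivative (jacPoly m e)
      - C ((m:ℝ)*(m+1)) * jacPoly m e) = ∑ k ∈ Finset.range (m+1),
      C (e k) * (((X-1)^k*(X+1)^(m-k)) *
      (2 * C ((k:ℝ)*(k+(c+1/2))) * (X+1) - 2 * C (((m-k:ℕ):ℝ)*((m-k:ℕ) - (c+1/2))) * (X-1))) := by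
    unfold jacPoly
    simp only [derivative_sum, derivative_C_mul, Finset.mul_sum]
    rw [← Finset.sum_add_distrib, ← Finset.sum_sub_distrib, Finset.mul_sum]
    apply Finset.sum_congr rfl
    intro k hk
    have hk' := Finset.mem_range.1 hk
    rw [← jac_term m k (m-k) (by omega) c]
    ring
  rw [hsum, Finset.sum_range_succ, hlast, Finset.sum_congr rfl hterm, Finset.sum_range_sub']
  simp [F]

open Polynomial in
lemma no_double_root (P B : ℝ[X]) (s d x : ℝ) (hP : P ≠ 0) (hx : (x-1)*(x+1) ≠ 0)
    (hode : ((X-1)*(X+1) : ℝ[X]) * derivative (derivative P) + B * derivative P - C s * P = 0)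
    (h0 : P.eval x = 0) (h1 : (derivative P).eval x = 0) : False := by
  have hk := (one_lt_rootMultiplicity_iff_isRoot hP).2 ⟨h0, h1⟩
  obtain ⟨R, hR, hnd⟩ := exists_eq_pow_rootMultiplicity_mul_and_not_dvd P hP x
  obtain ⟨n, hn⟩ := Nat.exists_eq_add_of_le' (Nat.succ_le_of_lt hk)
  rw [hn] at hR
  have hRx : R.eval x ≠ 0 := fun h => hnd (dvd_iff_isRoot.2 h)
  set q : ℝ[X] := X - C x with hq
  have hq0 : q ≠ 0 := X_sub_C_ne_zero x
  have hdq : derivative q = 1 := by simp [hq]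
  have hP' : P = q^n * (q^2 * R) := by rw [hR]; ring
  have e1 : derivative P = q^n * (q * (C ((n:ℝ)+2) * R + q * derivative R)) := by
    rw [hR, derivative_mul, derivative_pow, hdq]
    simp [pow_succ]
    ring
  have e2 : derivative (derivative P) = q^n * (C ((n:ℝ)+1) * (C ((n:ℝ)+2) * R + q * derivative R)
      + q * derivative (C ((n:ℝ)+2) * R + q * derivative R)) := by
    have : derivative P = q^(n+1) * (C ((n:ℝ)+2) * R + q * derivative R) := by rw [e1]; ring
    rw [this, derivative_mul, derivative_pow, hdq]
    simp [pow_succ]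
    ring
  rw [e2, e1] at hode
  nth_rewrite 1 [hP'] at hode
  have hz : q^n * (((X-1)*(X+1) : ℝ[X]) * (C ((n:ℝ)+1) * (C ((n:ℝ)+2) * R + q * derivative R)
      + q * derivative (C ((n:ℝ)+2) * R + q * derivative R))
      + B * (q * (C ((n:ℝ)+2) * R + q * derivative R)) - C s * (q^2 * R)) = 0 := by
    rw [← hode]; ring
  have hz2 := (mul_eq_zero.1 hz).resolve_left (pow_ne_zero n hq0)
  have hz3 := congrArg (eval x) hz2
  have hqx : q.eval x = 0 := by simp [hq]
  simp only [eval_add, eval_sub, eval_mul, eval_pow, hqx, eval_C, eval_X, eval_one, eval_zero] at hz3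
  have : (x-1)*(x+1) * (((n:ℝ)+1) * (((n:ℝ)+2) * R.eval x)) = 0 := by linear_combination hz3
  have p1 : (n:ℝ)+1 ≠ 0 := by positivity
  have p2 : (n:ℝ)+2 ≠ 0 := by positivity
  exact mul_ne_zero hx (mul_ne_zero p1 (mul_ne_zero p2 hRx)) this

open Polynomial in
lemma second_deriv_nonneg (P : ℝ[X]) (x : ℝ) (hmin : ∀ y, P.eval x ≤ P.eval y) :
    (derivative P).eval x = 0 ∧ 0 ≤ (derivative (derivative P)).eval x := by
  have hl : IsLocalMin (fun y => P.eval y) x := Filter.Eventually.of_forall hmin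
  have h1 : (derivative P).eval x = 0 := hl.hasDerivAt_eq_zero (P.hasDerivAt x)
  refine ⟨h1, ?_⟩
  have hr : (P - C (P.eval x)).IsRoot x := by simp
  obtain ⟨S, hS⟩ := dvd_iff_isRoot.2 hr
  have hd : derivative P = S + (X - C x) * derivative S := by
    have := congrArg derivative hS
    simpa [derivative_mul] using this
  have hSr : S.IsRoot x := by
    have := congrArg (eval x) hd
    simp [h1] at this
    exact this.symm
  obtain ⟨T, hT⟩ := dvd_iff_isRoot.2 hSr
  have hdd : (derivative (derivative P)).eval x = 2 * T.eval x := by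
    rw [hd, hT]
    simp [derivative_mul]
    ring
  rw [hdd]
  have hT0 : ∀ y, y ≠ x → 0 ≤ T.eval y := by
    intro y hy
    have := congrArg (eval y) hS
    rw [hT] at this
    simp at this
    have h2 := hmin y
    have h3 : 0 < (y-x)^2 := by have := sub_ne_zero.2 hy; positivity
    have h4 : 0 ≤ (y-x)^2 * T.eval y := by nlinarith
    exact (mul_nonneg_iff_of_pos_left h3).1 h4
  have : 0 ≤ T.eval x := by
    by_contra hneg
    push Not at hneg
    have hev : ∀ᶠ y in nhds x, T.eval y < 0 := T.continuous.continuousAt.eventually_lt_const hneg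
    obtain ⟨y, hy1, hy2⟩ := ((hev.filter_mono nhdsWithin_le_nhds).and
      (self_mem_nhdsWithin : ({x}ᶜ : Set ℝ) ∈ nhdsWithin x {x}ᶜ)).exists
    exact absurd (hT0 y hy2) (not_le.2 hy1)
  linarith

open Polynomial in
lemma even_exists_min (P : ℝ[X]) (m : ℕ) (hm : Even m) (hm0 : 0 < m) (hd : P.natDegree ≤ m)
    (hc : 0 < P.coeff m) : ∃ x, ∀ y, P.eval x ≤ P.eval y := by
  have hdeg : P.natDegree = m := le_antisymm hd (le_natDegree_of_ne_zero hc.ne')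
  have hlc : P.leadingCoeff = P.coeff m := by rw [leadingCoeff, hdeg]
  apply P.continuous.exists_forall_le
  rw [cocompact_eq_atBot_atTop, Filter.tendsto_sup]
  constructor
  · have h := tendsto_atTop_of_leadingCoeff_nonneg (P.comp (-X))
      (by rw [← natDegree_pos_iff_degree_pos, natDegree_comp]; simp [hdeg, hm0])
      (by rw [leadingCoeff_comp (by simp)]; simp [hdeg, hm.neg_one_pow, hlc, hc.le])
    have h2 := h.comp Filter.tendsto_neg_atBot_atTop
    refine h2.congr fun y => ?_
    simp
  · exact tendsto_atTop_of_leadingCoeff_nonneg P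
      (by rw [← natDegree_pos_iff_degree_pos, hdeg]; exact hm0) (by rw [hlc]; exact hc.le)

open Polynomial in
/-- For even `m`, `P_m^{(m+1/2,-m-1/2)}` has no real zeros. -/
theorem no_real_zeros_of_even (m : ℕ) (hm : Even m) :
    ∀ x : ℝ, jacobiP m ((m:ℝ) + 1/2) (-(m:ℝ) - 1/2) x ≠ 0 := by
  have hv : (m:ℝ) + (-(m:ℝ) - 1/2) = -1/2 := by ring
  set u : ℝ := (m:ℝ) + ((m:ℝ) + 1/2) with hu
  let e : ℕ → ℝ := fun k => gbinom u (m-k) * gbinom (-1/2) k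
  have hJ : ∀ x, jacobiP m ((m:ℝ) + 1/2) (-(m:ℝ) - 1/2) x
      = ((2:ℝ)^m)⁻¹ * (jacPoly m e).eval x := by
    intro x
    unfold jacobiP jacPoly
    rw [eval_finset_sum, hv]
    congr 1
    apply Finset.sum_congr rfl
    intro k _
    simp [e, hu]
    ring
  have hpos : ∀ x : ℝ, -1 ≤ x → x ≤ 1 → 0 < (jacPoly m e).eval x := by
    intro x h1 h2
    have hx : (jacPoly m e).eval x = ∑ k ∈ Finset.range (m+1),
        (gbinom u (m-k) * (gbinom (-1/2) k * (-1)^k)) * ((1-x)^k * (x+1)^(m-k)) := by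
      unfold jacPoly
      rw [eval_finset_sum]
      apply Finset.sum_congr rfl
      intro k _
      have : (x-1)^k = (-1)^k * (1-x)^k := by rw [← mul_pow]; ring
      simp [e, this]
      ring
    rw [hx]
    have hcoef : ∀ k, 0 < gbinom u (m-k) * (gbinom (-1/2) k * (-1)^k) := by
      intro k
      apply mul_pos _ (gbinom_neg_half k)
      apply gbinom_pos
      have : ((m-k:ℕ):ℝ) ≤ m := by exact_mod_cast Nat.sub_le m k
      have : (0:ℝ) ≤ m := by positivity
      linarith
    have ha : 0 ≤ 1 - x := by linarith
    have hb : 0 ≤ x + 1 := by linarith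
    apply Finset.sum_pos'
    · intro k _
      exact mul_nonneg (hcoef k).le (by positivity)
    · rcases le_or_gt x 0 with h | h
      · refine ⟨m, by simp, mul_pos (hcoef m) ?_⟩
        have : 0 < 1 - x := by linarith
        simp; positivity
      · exact ⟨0, by simp, mul_pos (hcoef 0) (by simp; positivity)⟩
  obtain ⟨hdeg, hco⟩ := jacPoly_coeff m e
  have hcpos : 0 < (jacPoly m e).coeff m := by
    rw [hco]
    simp only [e]
    rw [gbinom_vandermonde]
    apply gbinom_pos
    have : (0:ℝ) ≤ m := by positivity
    linarith
  have hode := jac_ode m e m (by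
    intro k i hki
    have a1 : m - k = i + 1 := by omega
    have a2 : m - (k+1) = i := by omega
    simp only [e, a1, a2]
    have g1 := gbinom_succ u i
    have g2 := gbinom_succ (-1/2) k
    have hmr : (m:ℝ) = k + (i+1) := by exact_mod_cast hki.symm
    have hu' : u - i = k + 1 + (m + 1/2) := by rw [hu]; linarith
    have hm' : (i:ℝ) + 1 - (m+1/2) = -1/2 - k := by linarith
    rw [hu'] at g1
    rw [hm']
    linear_combination gbinom u i * (k+1+(m+1/2)) * g2 - gbinom (-1/2) k * (-1/2 - k) * g1)
  have hP0 : jacPoly m e ≠ 0 := fun h => by rw [h] at hcpos; simp at hcpos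
  intro x
  rw [hJ]
  apply mul_ne_zero (by positivity)
  rcases Nat.eq_zero_or_pos m with h0 | hmpos
  · have hc := eq_C_of_natDegree_le_zero (by rw [← h0]; exact hdeg : (jacPoly m e).natDegree ≤ 0)
    rw [hc, eval_C, ← h0]
    rw [h0] at hcpos ⊢
    exact hcpos.ne'
  obtain ⟨x0, hx0⟩ := even_exists_min _ m hm hmpos hdeg hcpos
  suffices h : 0 < (jacPoly m e).eval x0 from (h.trans_le (hx0 x)).ne'
  by_contra hneg
  push Not at hneg
  have hout : 0 < (x0-1)*(x0+1) := by
    by_contra hin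
    push Not at hin
    have := hpos x0 (by nlinarith) (by nlinarith)
    linarith
  obtain ⟨h1, h2⟩ := second_deriv_nonneg _ x0 hx0
  have hev := congrArg (eval x0) hode
  simp only [eval_add, eval_sub, eval_mul, eval_C, eval_X, eval_one, eval_zero, h1, mul_zero,
    add_zero] at hev
  have hmm : (0:ℝ) < (m:ℝ)*(m+1) := by
    have : (0:ℝ) < m := by exact_mod_cast hmpos
    positivity
  have h3 := mul_nonneg hout.le h2
  have hz : (jacPoly m e).eval x0 = 0 := by
    apply le_antisymm hneg
    by_contra hlt
    push Not at hlt
    have := mul_neg_of_pos_of_neg hmm hlt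
    linarith
  exact no_double_root _ _ _ 0 x0 hP0 hout.ne' hode hz h1
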